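/- arXiv:2007.04031 — 2 statements merged into one kernel-verified Lean document; each statement's English description precedes it below -/
import Mathlib

section
/- Let (a_n)_{n≥1} be a Dold sequence of integers. Then (a_n) is bounded if and only if (a_n) is periodic; moreover, if (a_n) is bounded, then there exist finitely many integers b_1, …, b_N such that a_n = ∑_{k=1}^{N} b_k · reg_k(n) for all n ≥ 1. -/
/-- A sequence `(a n)` of integers (indexed by `n ≥ 1`) is a Dold sequence if for every
`n ≥ 1`, `n` divides `∑_{d ∣ n} μ(n/d) · a d`. -/
def DoldSeq (a : ℕ → ℤ) : Prop :=
  ∀ n : ℕ, 1 ≤ n →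
    (n : ℤ) ∣ ∑ d ∈ n.divisors, ArithmeticFunction.moebius (n / d) * a d

/-- The elementary periodic sequence `reg d`, with `reg d n = d` if `d ∣ n` and `0`
otherwise. -/
def reg (d n : ℕ) : ℤ := if d ∣ n then (d : ℤ) else 0

/-!
Möbius inversion writes `a n = ∑_{d ∣ n} c d` with `c n = ∑_{d ∣ n} μ(n/d) a d`, and the Dold
condition says `n ∣ c n`. Pairing each divisor `d` of `n` with `n / d` gives `τ(n) ≤ 2 √n`. So if
`|a| ≤ T`, then `|c n| ≤ τ(n) T ≤ 2 √n T < n` as soon as `n > 4 T²`, so `c n = 0` for all such `n`.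
Only the terms `c k = b k * k` with `k ≤ 4 T²` survive, and each of them contributes `b k * reg k n`
to `a n`. Such a finite combination is periodic.
-/

section Periodic

variable {α : Type*}

lemma finite_range_of_periodic {f : ℕ → α} {N : ℕ} (hf : Function.Periodic f N) (hN : N ≠ 0) :
    (Set.range f).Finite := by
  refine ((Set.finite_Iio N).image f).subset ?_
  rintro _ ⟨n, rfl⟩
  exact ⟨n % N, Nat.mod_lt n (Nat.pos_of_ne_zero hN), hf.map_mod_nat n⟩

lemma exists_abs_le_of_eventually_periodic [AddGroup α] [Lattice α]
    {a : ℕ → α} {m N : ℕ} (hN : N ≠ 0) (ha : ∀ n, m ≤ n → a (n + N) = a n) :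
    ∃ T, ∀ n, m ≤ n → |a n| ≤ T := by
  have hper : Function.Periodic (fun n ↦ |a (m + n)|) N := fun n ↦ by
    simp only [← add_assoc, ha (m + n) (Nat.le_add_right m n)]
  obtain ⟨T, hT⟩ := (finite_range_of_periodic hper hN).bddAbove
  refine ⟨T, fun n hn ↦ ?_⟩
  obtain ⟨k, rfl⟩ := Nat.exists_eq_add_of_le hn
  exact hT ⟨k, rfl⟩

end Periodic

section Divisors

open Finset

lemma card_divisors_le_two_mul_sqrt (n : ℕ) : #n.divisors ≤ 2 * n.sqrt := by
  have hcover : n.divisors ⊆ Icc 1 n.sqrt ∪ (Icc 1 n.sqrt).image (n / ·) := by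
    intro d hd
    obtain ⟨⟨e, rfl⟩, hde⟩ := Nat.mem_divisors.mp hd
    obtain ⟨hd0, he0⟩ := Nat.mul_ne_zero_iff.mp hde
    rcases le_total d e with hle | hle
    · have hsqrt : d ≤ (d * e).sqrt := Nat.le_sqrt.mpr (Nat.mul_le_mul_left d hle)
      exact mem_union_left _ (mem_Icc.mpr ⟨Nat.pos_of_ne_zero hd0, hsqrt⟩)
    · have hsqrt : e ≤ (d * e).sqrt := Nat.le_sqrt.mpr (Nat.mul_le_mul_right e hle)
      exact mem_union_right _ (mem_image.mpr ⟨e, mem_Icc.mpr ⟨Nat.pos_of_ne_zero he0, hsqrt⟩,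
        Nat.mul_div_cancel d (Nat.pos_of_ne_zero he0)⟩)
  calc #n.divisors ≤ #(Icc 1 n.sqrt) + #((Icc 1 n.sqrt).image (n / ·)) :=
        (card_le_card hcover).trans (card_union_le _ _)
    _ ≤ #(Icc 1 n.sqrt) + #(Icc 1 n.sqrt) := Nat.add_le_add_left card_image_le _
    _ = 2 * n.sqrt := by rw [Nat.card_Icc, Nat.add_sub_cancel, two_mul]

lemma card_divisors_sq_le (n : ℕ) : #n.divisors ^ 2 ≤ 4 * n :=
  calc #n.divisors ^ 2 ≤ (2 * n.sqrt) ^ 2 := Nat.pow_le_pow_left (card_divisors_le_two_mul_sqrt n) 2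
    _ = 4 * n.sqrt ^ 2 := by ring
    _ ≤ 4 * n := Nat.mul_le_mul_left 4 (Nat.sqrt_le' n)

lemma card_divisors_mul_lt_of_four_mul_sq_lt {R : Type*} [CommSemiring R] [LinearOrder R]
    [IsStrictOrderedRing R] [ExistsAddOfLE R] {T : R} {n : ℕ} (hT : 4 * T ^ 2 < n) :
    #n.divisors * T < n := by
  have hcard : (#n.divisors : R) ^ 2 ≤ 4 * n := mod_cast card_divisors_sq_le n
  have hn : (0 : R) < n := (mul_nonneg zero_le_four (sq_nonneg T)).trans_lt hT
  refine lt_of_pow_lt_pow_left₀ 2 hn.le ?_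
  calc (#n.divisors * T) ^ 2 = #n.divisors ^ 2 * T ^ 2 := mul_pow _ _ _
    _ ≤ 4 * n * T ^ 2 := mul_le_mul_of_nonneg_right hcard (sq_nonneg T)
    _ = n * (4 * T ^ 2) := by ring
    _ < n * n := mul_lt_mul_of_pos_left hT hn
    _ = (n : R) ^ 2 := (sq _).symm

end Divisors

section MoebiusTransform

open Finset ArithmeticFunction
open scoped ArithmeticFunction.Moebius

/-- The Möbius transform `n ↦ ∑_{d ∣ n} μ(n/d) · a d`, whose value at `n` a Dold sequence requires
to be divisible by `n`. As `Nat.divisors 0 = ∅`, its value at `0` is `0`. -/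
def moebiusTransform {M : Type*} [AddCommGroup M] (a : ℕ → M) (n : ℕ) : M :=
  ∑ d ∈ n.divisors, μ (n / d) • a d

variable {M : Type*} [AddCommGroup M]

lemma sum_divisors_moebiusTransform (a : ℕ → M) {n : ℕ} (hn : 0 < n) :
    ∑ d ∈ n.divisors, moebiusTransform a d = a n := by
  refine sum_eq_iff_sum_smul_moebius_eq.mpr (fun m _ ↦ ?_) n hn
  exact Nat.sum_divisorsAntidiagonal' fun k d ↦ μ k • a d

lemma abs_moebiusTransform_le [LinearOrder M] [IsOrderedAddMonoid M] {a : ℕ → M} {T : M} {n : ℕ}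
    (ha : ∀ d ∈ n.divisors, |a d| ≤ T) : |moebiusTransform a n| ≤ #n.divisors • T := by
  refine (abs_sum_le_sum_abs _ _).trans (sum_le_card_nsmul _ _ _ fun d hd ↦ ?_)
  calc |μ (n / d) • a d| = |μ (n / d)| • |a d| := abs_zsmul _ _
    _ ≤ (1 : ℤ) • |a d| := zsmul_le_zsmul_left (abs_nonneg _) abs_moebius_le_one
    _ = |a d| := one_zsmul _
    _ ≤ T := ha d hd

end MoebiusTransform

section Reg

open Finset

lemma periodic_reg_of_dvd {d N : ℕ} (h : d ∣ N) : Function.Periodic (reg d) N := fun n ↦ by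
  simp only [reg, Nat.dvd_add_left h]

lemma periodic_sum_mul_reg (N : ℕ) (b : ℕ → ℤ) :
    Function.Periodic (fun n ↦ ∑ k ∈ Icc 1 N, b k * reg k n) N.factorial := fun n ↦
  sum_congr rfl fun k hk ↦ by
    obtain ⟨hk1, hkN⟩ := mem_Icc.mp hk
    rw [periodic_reg_of_dvd (Nat.dvd_factorial hk1 hkN) n]

lemma sum_Icc_mul_reg (b : ℕ → ℤ) (N : ℕ) {n : ℕ} (hn : 0 < n) :
    ∑ k ∈ Icc 1 N, b k * reg k n = ∑ k ∈ n.divisors with k ≤ N, b k * k := by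
  have hfilter : {k ∈ n.divisors | k ≤ N} = {k ∈ Icc 1 N | k ∣ n} := by
    ext k
    simp only [mem_filter, Nat.mem_divisors, mem_Icc]
    exact ⟨fun ⟨⟨hkn, _⟩, hkN⟩ ↦ ⟨⟨Nat.pos_of_dvd_of_pos hkn hn, hkN⟩, hkn⟩,
      fun ⟨⟨_, hkN⟩, hkn⟩ ↦ ⟨⟨hkn, hn.ne'⟩, hkN⟩⟩
  simp only [hfilter, sum_filter, reg, mul_ite, mul_zero]

end Reg

namespace DoldSeq

open Finset

variable {a : ℕ → ℤ}

lemma dvd_moebiusTransform (ha : DoldSeq a) (n : ℕ) : (n : ℤ) ∣ moebiusTransform a n := by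
  rcases n.eq_zero_or_pos with rfl | hn
  · simp [moebiusTransform]
  · exact ha n hn

lemma eq_sum_mul_reg_of_moebiusTransform_eq_zero (ha : DoldSeq a) {N : ℕ}
    (hN : ∀ n, N < n → moebiusTransform a n = 0) {n : ℕ} (hn : 0 < n) :
    a n = ∑ k ∈ Icc 1 N, moebiusTransform a k / k * reg k n := by
  calc a n = ∑ k ∈ n.divisors, moebiusTransform a k := (sum_divisors_moebiusTransform a hn).symm
    _ = ∑ k ∈ n.divisors with k ≤ N, moebiusTransform a k :=
        (sum_filter_of_ne fun k _ hk ↦ not_lt.mp fun hlt ↦ hk (hN k hlt)).symm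
    _ = ∑ k ∈ n.divisors with k ≤ N, moebiusTransform a k / k * k :=
        sum_congr rfl fun k _ ↦ (Int.ediv_mul_cancel (ha.dvd_moebiusTransform k)).symm
    _ = ∑ k ∈ Icc 1 N, moebiusTransform a k / k * reg k n := (sum_Icc_mul_reg _ N hn).symm

lemma moebiusTransform_eq_zero_of_abs_le (ha : DoldSeq a) {T : ℤ} {n : ℕ}
    (hT : ∀ d ∈ n.divisors, |a d| ≤ T) (hn : 4 * T ^ 2 < n) : moebiusTransform a n = 0 := by
  refine Int.eq_zero_of_abs_lt_dvd (ha.dvd_moebiusTransform n) ?_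
  calc |moebiusTransform a n| ≤ #n.divisors • T := abs_moebiusTransform_le hT
    _ = #n.divisors * T := nsmul_eq_mul _ _
    _ < n := card_divisors_mul_lt_of_four_mul_sq_lt hn

lemma exists_eq_sum_mul_reg_of_abs_le (ha : DoldSeq a) {T : ℤ}
    (hT : ∀ n : ℕ, 1 ≤ n → |a n| ≤ T) :
    ∃ (N : ℕ) (b : ℕ → ℤ), ∀ n : ℕ, 1 ≤ n → a n = ∑ k ∈ Icc 1 N, b k * reg k n :=
  ⟨(4 * T ^ 2).toNat, fun k ↦ moebiusTransform a k / k, fun _ ↦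
    ha.eq_sum_mul_reg_of_moebiusTransform_eq_zero fun _ hm ↦
      ha.moebiusTransform_eq_zero_of_abs_le (fun d hd ↦ hT d (Nat.pos_of_mem_divisors hd))
        (Int.lt_of_toNat_lt hm)⟩

end DoldSeq

/-- A Dold sequence is bounded if and only if it is periodic; moreover a bounded Dold
sequence is a finite integer linear combination of the elementary periodic sequences
`reg k`. -/
theorem dold_bounded_iff_periodic (a : ℕ → ℤ) (hdold : DoldSeq a) :
    ((∃ T : ℤ, ∀ n : ℕ, 1 ≤ n → |a n| ≤ T) ↔
      (∃ N : ℕ, 1 ≤ N ∧ ∀ n : ℕ, 1 ≤ n → a (n + N) = a n)) ∧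
    ((∃ T : ℤ, ∀ n : ℕ, 1 ≤ n → |a n| ≤ T) →
      ∃ (N : ℕ) (b : ℕ → ℤ), ∀ n : ℕ, 1 ≤ n → a n = ∑ k ∈ Finset.Icc 1 N, b k * reg k n) := by
  have hreg : (∃ T : ℤ, ∀ n : ℕ, 1 ≤ n → |a n| ≤ T) →
      ∃ (N : ℕ) (b : ℕ → ℤ), ∀ n : ℕ, 1 ≤ n → a n = ∑ k ∈ Finset.Icc 1 N, b k * reg k n :=
    fun ⟨_, hT⟩ ↦ hdold.exists_eq_sum_mul_reg_of_abs_le hT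
  refine ⟨⟨fun hbdd ↦ ?_, fun ⟨N, hN, hper⟩ ↦ ?_⟩, hreg⟩
  · obtain ⟨N, b, hb⟩ := hreg hbdd
    refine ⟨N.factorial, N.factorial_pos, fun n hn ↦ ?_⟩
    rw [hb n hn, hb _ (Nat.le_add_right_of_le hn)]
    exact periodic_sum_mul_reg N b n
  · exact exists_abs_le_of_eventually_periodic (Nat.ne_of_gt hN) hper
end

section
/- Let (a_n)_{n≥1} be a sequence of non-negative integers. There exist a compact metric space X and a homeomorphism T : X → X such that for every n ≥ 1 the set {x ∈ X : T^n(x) = x} is finite of cardinality a_n, if and only if for every n ≥ 1 the integer ∑_{d|n} μ(n/d)·a_d is non-negative and divisible by n. -/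
/-- A witness that the sequence `a` is realized by a homeomorphism of a compact metric
space: a compact metric space `X` and a homeomorphism `T : X ≃ₜ X` such that for each
`n ≥ 1` the set of points fixed by the `n`-th iterate of `T` is finite of cardinality
`a n`. -/
structure CompactRealization (a : ℕ → ℕ) where
  X : Type
  [instMetric : MetricSpace X]
  [instCompact : CompactSpace X]
  T : X ≃ₜ X
  finite_fixed : ∀ n : ℕ, 1 ≤ n → {x : X | (⇑T)^[n] x = x}.Finite
  card_fixed : ∀ n : ℕ, 1 ≤ n → {x : X | (⇑T)^[n] x = x}.ncard = a n

/-!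
Everything passes through the numbers `b d` of orbits of length `d`: the fixed points of `T^n` are
the points whose minimal period divides `n`, so `a n = ∑_{d ∣ n} b d * d`, and Möbius inversion says
that such `b d ∈ ℕ` exist exactly when the Möbius sums of `a` are non-negative and `n` divides the
`n`-th one.

It remains to realize arbitrary `b`. Infinitely many finite orbits in a compact space must
accumulate somewhere, and the limit must not create new periodic points. Each orbit of length `d` is
realized as the cyclic subgroup generated by an element `s_d` of the torus of order exactly `d`,
translated by `s_d`, where the `s_d` converge to an element `l` of infinite order. The limiting
fibre is the whole torus translated by `l`, which has no periodic points at all.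
-/

open Function Filter Topology Set ArithmeticFunction
open scoped OnePoint

section MinimalPeriod

variable {α β : Type*} {f : α → α} {x y : α} {n : ℕ}

theorem card_toFinset_periodicOrbit [DecidableEq α] :
    (periodicOrbit f x).toFinset.card = minimalPeriod f x := by
  have hnodup : ((List.range (minimalPeriod f x)).map fun k => f^[k] x).Nodup := by
    simpa [periodicOrbit] using nodup_periodicOrbit (f := f) (x := x)
  simpa [periodicOrbit] using List.toFinset_card_of_nodup hnodup

theorem periodicOrbit_eq_periodicOrbit_iff (hx : x ∈ periodicPts f) (hy : y ∈ periodicPts f) :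
    periodicOrbit f x = periodicOrbit f y ↔ x ∈ periodicOrbit f y := by
  refine ⟨fun h => h ▸ self_mem_periodicOrbit hx, fun h => ?_⟩
  obtain ⟨k, rfl⟩ := (mem_periodicOrbit_iff hy).1 h
  exact periodicOrbit_apply_iterate_eq hy k

theorem minimalPeriod_eq_of_mem_periodicOrbit (hy : y ∈ periodicPts f)
    (h : x ∈ periodicOrbit f y) : minimalPeriod f x = minimalPeriod f y := by
  obtain ⟨k, rfl⟩ := (mem_periodicOrbit_iff hy).1 h
  exact minimalPeriod_apply_iterate hy k

theorem dvd_ncard_minimalPeriod_eq (hn : 0 < n) (hfin : {x | minimalPeriod f x = n}.Finite) :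
    n ∣ {x | minimalPeriod f x = n}.ncard := by
  classical
  have hper {x : α} (hx : minimalPeriod f x = n) : x ∈ periodicPts f :=
    minimalPeriod_pos_iff_mem_periodicPts.1 (hx ▸ hn)
  rw [ncard_eq_toFinset_card _ hfin, Finset.card_eq_sum_card_image (periodicOrbit f)]
  refine Finset.dvd_sum fun c hc => ?_
  obtain ⟨y, hy, rfl⟩ := Finset.mem_image.1 hc
  replace hy : minimalPeriod f y = n := by simpa using hy
  have hfiber : {x ∈ hfin.toFinset | periodicOrbit f x = periodicOrbit f y} =
      (periodicOrbit f y).toFinset := by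
    ext x
    have hmem : x ∈ (periodicOrbit f y).toFinset ↔ x ∈ periodicOrbit f y := by
      simp [periodicOrbit]
    rw [hmem, Finset.mem_filter, Finite.mem_toFinset]
    refine ⟨fun ⟨hx, h⟩ => (periodicOrbit_eq_periodicOrbit_iff (hper hx) (hper hy)).1 h,
      fun h => ?_⟩
    have hx : minimalPeriod f x = n := (minimalPeriod_eq_of_mem_periodicOrbit (hper hy) h).trans hy
    exact ⟨hx, (periodicOrbit_eq_periodicOrbit_iff (hper hx) (hper hy)).2 h⟩
  rw [hfiber, card_toFinset_periodicOrbit, hy]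

theorem ptsOfPeriod_eq_biUnion_divisors (hn : 0 < n) :
    ptsOfPeriod f n = ⋃ d ∈ n.divisors, {x | minimalPeriod f x = d} := by
  ext x
  simp [isPeriodicPt_iff_minimalPeriod_dvd, hn.ne']

theorem finite_ptsOfPeriod (hn : 0 < n)
    (hfin : ∀ d ∈ n.divisors, {x | minimalPeriod f x = d}.Finite) : (ptsOfPeriod f n).Finite := by
  rw [ptsOfPeriod_eq_biUnion_divisors hn]
  exact n.divisors.finite_toSet.biUnion hfin

theorem ncard_ptsOfPeriod (hn : 0 < n)
    (hfin : ∀ d ∈ n.divisors, {x | minimalPeriod f x = d}.Finite) :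
    (ptsOfPeriod f n).ncard = ∑ d ∈ n.divisors, {x | minimalPeriod f x = d}.ncard := by
  have hdisj : (n.divisors : Set ℕ).PairwiseDisjoint fun d => {x | minimalPeriod f x = d} :=
    fun d _ e _ hde => disjoint_left.2 fun x hxd hxe => hde (hxd.symm.trans hxe)
  rw [ptsOfPeriod_eq_biUnion_divisors hn, ← finsum_mem_coe_finset]
  exact n.divisors.finite_toSet.ncard_biUnion hfin hdisj

theorem minimalPeriod_apply_of_semiconj_of_injective {g : α → β} {f' : β → β}
    (h : Semiconj g f f') (hg : Injective g) (x : α) :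
    minimalPeriod f' (g x) = minimalPeriod f x := by
  refine minimalPeriod_eq_minimalPeriod_iff.2 fun n => ?_
  rw [IsPeriodicPt, IsFixedPt, ← (h.iterate_right n).eq, hg.eq_iff, IsPeriodicPt, IsFixedPt]

end MinimalPeriod

section MoebiusInversion

theorem sum_divisors_eq_iff_sum_moebius_mul_eq {R : Type*} [NonAssocRing R] {f g : ℕ → R} :
    (∀ n > 0, ∑ d ∈ n.divisors, f d = g n) ↔
      ∀ n > 0, ∑ d ∈ n.divisors, (moebius (n / d) : R) * g d = f n := by
  rw [sum_eq_iff_sum_mul_moebius_eq]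
  simp only [Nat.sum_divisorsAntidiagonal' fun i j => (moebius i : R) * g j]

theorem forall_moebius_sum_nonneg_and_dvd_iff {a : ℕ → ℤ} :
    (∀ n : ℕ, 0 < n → 0 ≤ ∑ d ∈ n.divisors, moebius (n / d) * a d ∧
        (n : ℤ) ∣ ∑ d ∈ n.divisors, moebius (n / d) * a d) ↔
      ∃ b : ℕ → ℕ, ∀ n > 0, ∑ d ∈ n.divisors, (b d * d : ℤ) = a n := by
  have inversion (b : ℕ → ℕ) : (∀ n > 0, ∑ d ∈ n.divisors, (b d * d : ℤ) = a n) ↔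
      ∀ n > 0, ∑ d ∈ n.divisors, moebius (n / d) * a d = b n * n := by
    simpa using sum_divisors_eq_iff_sum_moebius_mul_eq (f := fun d => (b d * d : ℤ)) (g := a)
  simp only [inversion]
  constructor
  · intro h
    refine ⟨fun n => ((∑ d ∈ n.divisors, moebius (n / d) * a d) / n).toNat, fun n hn => ?_⟩
    obtain ⟨hnonneg, hdvd⟩ := h n hn
    rw [Int.toNat_of_nonneg (Int.ediv_nonneg hnonneg n.cast_nonneg), Int.ediv_mul_cancel hdvd]
  · rintro ⟨b, hb⟩ n hn
    rw [hb n hn]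
    exact ⟨by positivity, dvd_mul_left _ _⟩

end MoebiusInversion

section SkewRotation

variable {B K : Type*} [TopologicalSpace B] [TopologicalSpace K] [AddGroup K]
  [IsTopologicalAddGroup K]

/-- The skew product over the identity of `B` which rotates the fibre `{x} × K` by `γ x`. -/
def skewRotation (γ : C(B, K)) : B × K ≃ₜ B × K where
  toFun p := (p.1, p.2 + γ p.1)
  invFun p := (p.1, p.2 - γ p.1)
  left_inv p := by simp
  right_inv p := by simp

theorem skewRotation_apply (γ : C(B, K)) (p : B × K) :
    skewRotation γ p = (p.1, p.2 + γ p.1) :=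
  rfl

theorem iterate_skewRotation (γ : C(B, K)) (n : ℕ) (p : B × K) :
    (skewRotation γ)^[n] p = (p.1, p.2 + n • γ p.1) := by
  induction n with
  | zero => simp
  | succ n ih => rw [iterate_succ_apply', ih, skewRotation_apply, add_assoc, ← succ_nsmul]

theorem minimalPeriod_skewRotation (γ : C(B, K)) (p : B × K) :
    minimalPeriod (skewRotation γ) p = addOrderOf (γ p.1) := by
  refine Nat.dvd_right_iff_eq.1 fun n => ?_
  rw [← isPeriodicPt_iff_minimalPeriod_dvd, addOrderOf_dvd_iff_nsmul_eq_zero, IsPeriodicPt,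
    IsFixedPt, iterate_skewRotation, Prod.ext_iff]
  simp

end SkewRotation

theorem metrizableSpace_onePoint (ι : Type*) [TopologicalSpace ι] [DiscreteTopology ι]
    [Countable ι] : TopologicalSpace.MetrizableSpace (OnePoint ι) := by
  obtain ⟨e, he⟩ := exists_injective_nat ι
  have hcont : Continuous (OnePoint.map e) :=
    OnePoint.continuous_map continuous_of_discreteTopology (by
      simpa only [coclosedCompact_eq_cocompact, cocompact_eq_cofinite] using he.tendsto_cofinite)
  exact (hcont.isClosedEmbedding (Option.map_injective he)).metrizableSpace

section RotationBundle

variable {ι K : Type*} [TopologicalSpace ι] [TopologicalSpace K] [AddGroup K]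

/-- The bundle over `OnePoint ι` whose fibre over `i : ι` is the subgroup generated by `γ i`, and
whose fibre over `∞` is all of `K`. When each `γ i` has finite order, the fibre over `i` is a single
periodic orbit of the rotation by `γ i`. -/
def rotationBundle (γ : C(OnePoint ι, K)) : Set (OnePoint ι × K) :=
  {p | ∀ i : ι, p.1 = i → p.2 ∈ AddSubgroup.zmultiples (γ i)}

variable {γ : C(OnePoint ι, K)}

theorem isClosed_rotationBundle [DiscreteTopology ι] [T1Space K]
    (hγ : ∀ i : ι, IsOfFinAddOrder (γ i)) : IsClosed (rotationBundle γ) := by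
  have hunion : rotationBundle γ = ⋂ i : ι,
      (Prod.fst ⁻¹' {(i : OnePoint ι)}ᶜ) ∪ Prod.snd ⁻¹' (AddSubgroup.zmultiples (γ i)) := by
    ext p
    simp [rotationBundle, imp_iff_not_or]
  rw [hunion]
  refine isClosed_iInter fun i => .union ?_ ?_
  · have hopen : IsOpen {(i : OnePoint ι)} := by
      simpa using OnePoint.isOpenMap_coe {i} (isOpen_discrete _)
    exact hopen.isClosed_compl.preimage continuous_fst
  · have hfinite : (AddSubgroup.zmultiples (γ i) : Set K).Finite := (hγ i).finite_zmultiples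
    exact hfinite.isClosed.preimage continuous_snd

theorem skewRotation_mem_rotationBundle_iff [IsTopologicalAddGroup K] (p : OnePoint ι × K) :
    skewRotation γ p ∈ rotationBundle γ ↔ p ∈ rotationBundle γ := by
  refine forall₂_congr fun i hi => ?_
  replace hi : p.1 = i := hi
  rw [skewRotation_apply, hi]
  exact AddSubgroup.add_mem_cancel_right _ (AddSubgroup.mem_zmultiples _)

/-- The restriction of `skewRotation γ` to the invariant set `rotationBundle γ`. -/
def bundleRotation [IsTopologicalAddGroup K] (γ : C(OnePoint ι, K)) :
    rotationBundle γ ≃ₜ rotationBundle γ :=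
  (skewRotation γ).subtype fun p => (skewRotation_mem_rotationBundle_iff p).symm

theorem minimalPeriod_bundleRotation [IsTopologicalAddGroup K] (p : rotationBundle γ) :
    minimalPeriod (bundleRotation γ) p = addOrderOf (γ p.1.1) := by
  have hsemiconj : Semiconj Subtype.val (bundleRotation γ) (skewRotation γ) := fun _ => rfl
  rw [← minimalPeriod_apply_of_semiconj_of_injective hsemiconj Subtype.val_injective,
    minimalPeriod_skewRotation]

/-- The inclusion of the fibres over the points `i : ι` with `γ i` of order `d`. -/
def sigmaZMultiplesToBundle (γ : C(OnePoint ι, K)) (d : ℕ)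
    (q : Σ i : {i : ι // addOrderOf (γ i) = d}, AddSubgroup.zmultiples (γ i)) :
    {p : rotationBundle γ // addOrderOf (γ p.1.1) = d} :=
  ⟨⟨(q.1.1, q.2), fun _ hi => OnePoint.coe_injective hi ▸ q.2.2⟩, q.1.2⟩

theorem bijective_sigmaZMultiplesToBundle {d : ℕ} (hd : addOrderOf (γ ∞) ≠ d) :
    Bijective (sigmaZMultiplesToBundle γ d) := by
  constructor
  · rintro ⟨⟨i, hi⟩, z, hz⟩ ⟨⟨j, hj⟩, w, hw⟩ h
    obtain ⟨hbase, hfibre⟩ := Prod.ext_iff.1 (congrArg (fun p => p.1.1) h)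
    obtain rfl : i = j := OnePoint.coe_injective hbase
    obtain rfl : z = w := hfibre
    rfl
  · rintro ⟨⟨⟨x, z⟩, hp⟩, hx⟩
    induction x using OnePoint.rec with
    | infty => exact absurd hx hd
    | coe i => exact ⟨⟨⟨i, hx⟩, z, hp i rfl⟩, rfl⟩

/-- The points of minimal period `d` of `bundleRotation γ`, as `d` points over each `i : ι` with
`γ i` of order `d`. -/
noncomputable def minimalPeriodEquiv [IsTopologicalAddGroup K] {d : ℕ} (hd : 0 < d)
    (hγ : addOrderOf (γ ∞) ≠ d) :
    {p // minimalPeriod (bundleRotation γ) p = d} ≃ {i : ι // addOrderOf (γ i) = d} × Fin d :=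
  (Equiv.subtypeEquivRight fun p => by rw [minimalPeriod_bundleRotation]).trans <|
    (Equiv.ofBijective _ (bijective_sigmaZMultiplesToBundle hγ)).symm.trans <|
    Equiv.sigmaEquivProdOfEquiv fun i =>
      (finEquivZMultiples (addOrderOf_pos_iff.1 (hd.trans_eq i.2.symm))).symm.trans (finCongr i.2)

end RotationBundle

section TorusRotation

/-- A rotation of the torus of order `d`: the first coordinate approximates `θ`, and the second one
forces the order to be exactly `d`, whether or not the fraction `⌊θ d⌋ / d` is reduced. -/
noncomputable def torusRotation (θ : ℝ) (d : ℕ) : UnitAddCircle × UnitAddCircle :=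
  (((⌊θ * d⌋₊ / d : ℝ) : UnitAddCircle), ((1 / d : ℝ) : UnitAddCircle))

theorem addOrderOf_torusRotation (θ : ℝ) {d : ℕ} (hd : 0 < d) :
    addOrderOf (torusRotation θ d) = d := by
  have hsnd : addOrderOf ((1 / d : ℝ) : UnitAddCircle) = d := AddCircle.addOrderOf_period_div hd
  have hfst : addOrderOf ((⌊θ * d⌋₊ / d : ℝ) : UnitAddCircle) ∣ d := by
    rw [addOrderOf_dvd_iff_nsmul_eq_zero, ← AddCircle.coe_nsmul, AddCircle.coe_eq_zero_iff]
    exact ⟨⌊θ * d⌋₊, by simp; field_simp⟩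
  rw [torusRotation, Prod.addOrderOf_mk, hsnd, Nat.lcm_eq_right hfst]

theorem tendsto_torusRotation {θ : ℝ} (hθ : 0 ≤ θ) :
    Tendsto (torusRotation θ) atTop (𝓝 ((θ : UnitAddCircle), ((0 : ℝ) : UnitAddCircle))) := by
  have hcoe (x : ℝ) : Tendsto ((↑) : ℝ → UnitAddCircle) (𝓝 x) (𝓝 x) :=
    (AddCircle.continuous_mk' 1).tendsto x
  exact ((hcoe _).comp <| (tendsto_nat_floor_mul_div_atTop hθ).comp
    tendsto_natCast_atTop_atTop).prodMk_nhds ((hcoe _).comp tendsto_one_div_atTop_nhds_zero_nat)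

theorem addOrderOf_coe_prod_eq_zero_of_irrational {A : Type*} [AddMonoid A] {θ : ℝ}
    (hθ : Irrational θ) (x : A) : addOrderOf ((θ : UnitAddCircle), x) = 0 := by
  have hfst : ¬IsOfFinAddOrder (θ : UnitAddCircle) :=
    AddCircle.not_isOfFinAddOrder_iff_forall_rat_ne_div.2 fun q hq => hθ ⟨q, by simpa using hq⟩
  rw [Prod.addOrderOf_mk, addOrderOf_eq_zero hfst, Nat.lcm_zero_left]

end TorusRotation

theorem tendsto_sigma_pnat_fst_cofinite {β : ℕ+ → Type*} [∀ d, Finite (β d)] :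
    Tendsto (fun i : Σ d, β d => (i.1 : ℕ)) cofinite atTop := by
  rw [← Nat.cofinite_eq_atTop]
  refine PNat.coe_injective.tendsto_cofinite.comp
    (Tendsto.cofinite_of_finite_preimage_singleton fun d => ?_)
  exact finite_coe_iff.1 (.of_equiv _ (Equiv.sigmaSubtype (β := β) d).symm)

theorem exists_homeomorph_ncard_minimalPeriod_eq_mul (b : ℕ → ℕ) :
    ∃ (X : Type) (_ : MetricSpace X) (_ : CompactSpace X) (T : X ≃ₜ X), ∀ d > 0,
      {x | minimalPeriod T x = d}.Finite ∧ {x | minimalPeriod T x = d}.ncard = b d * d := by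
  let ι := Σ d : ℕ+, Fin (b d)
  let _ : TopologicalSpace ι := ⊥
  have : DiscreteTopology ι := ⟨rfl⟩
  let γ : C(OnePoint ι, UnitAddCircle × UnitAddCircle) :=
    OnePoint.continuousMapMkDiscrete (fun i => torusRotation √2 i.1) _
      ((tendsto_torusRotation (Real.sqrt_nonneg 2)).comp tendsto_sigma_pnat_fst_cofinite)
  have hcoe (i : ι) : addOrderOf (γ i) = i.1 := addOrderOf_torusRotation _ i.1.pos
  have hinfty : addOrderOf (γ ∞) = 0 :=
    addOrderOf_coe_prod_eq_zero_of_irrational irrational_sqrt_two _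
  have hclosed : IsClosed (rotationBundle γ) :=
    isClosed_rotationBundle fun i => addOrderOf_pos_iff.1 (hcoe i ▸ i.1.pos)
  have := metrizableSpace_onePoint ι
  refine ⟨rotationBundle γ, TopologicalSpace.metrizableSpaceMetric _,
    isCompact_iff_compactSpace.1 hclosed.isCompact, bundleRotation γ, fun d hd => ?_⟩
  lift d to ℕ+ using hd
  have horbits : {i : ι // addOrderOf (γ i) = d} ≃ Fin (b d) :=
    (Equiv.subtypeEquivRight fun i => by rw [hcoe, PNat.coe_inj]).trans (Equiv.sigmaSubtype d)
  have hpoints : {p | minimalPeriod (bundleRotation γ) p = d} ≃ Fin (b d) × Fin d :=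
    (minimalPeriodEquiv d.pos (hinfty.trans_ne d.ne_zero.symm)).trans
      (horbits.prodCongr (Equiv.refl _))
  exact ⟨finite_coe_iff.1 (.of_equiv _ hpoints.symm), by
    rw [← Nat.card_coe_set_eq, Nat.card_congr hpoints, Nat.card_prod, Nat.card_fin, Nat.card_fin]⟩

theorem nonempty_compactRealization_iff {a : ℕ → ℕ} :
    Nonempty (CompactRealization a) ↔
      ∃ b : ℕ → ℕ, ∀ n > 0, ∑ d ∈ n.divisors, b d * d = a n := by
  constructor
  · rintro ⟨X, T, hfin, hcard⟩
    have hfin' : ∀ d > 0, {x | minimalPeriod T x = d}.Finite := fun d hd =>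
      (hfin d hd).subset fun x hx => hx ▸ iterate_minimalPeriod
    refine ⟨fun d => {x | minimalPeriod T x = d}.ncard / d, fun n hn => ?_⟩
    have hpos {d : ℕ} (hd : d ∈ n.divisors) : 0 < d := Nat.pos_of_mem_divisors hd
    rw [← hcard n hn]
    refine .trans ?_ (ncard_ptsOfPeriod hn fun d hd => hfin' d (hpos hd)).symm
    exact Finset.sum_congr rfl fun d hd =>
      Nat.div_mul_cancel (dvd_ncard_minimalPeriod_eq (hpos hd) (hfin' d (hpos hd)))
  · rintro ⟨b, hb⟩
    obtain ⟨X, _, _, T, hT⟩ := exists_homeomorph_ncard_minimalPeriod_eq_mul b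
    have hfin {n d : ℕ} (hd : d ∈ n.divisors) := (hT d (Nat.pos_of_mem_divisors hd)).1
    refine ⟨⟨X, T, fun n hn => finite_ptsOfPeriod hn fun _ => hfin, fun n hn => ?_⟩⟩
    rw [← hb n hn]
    exact (ncard_ptsOfPeriod hn fun _ => hfin).trans <|
      Finset.sum_congr rfl fun d hd => (hT d (Nat.pos_of_mem_divisors hd)).2

/-- A sequence of non-negative integers is realizable by a homeomorphism of a compact
metric space if and only if, for every `n ≥ 1`, the Möbius sum `∑_{d ∣ n} μ(n/d)·a d`
is non-negative and divisible by `n`. -/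
theorem compact_realizable_iff_moebius_sum_nonneg_and_dvd (a : ℕ → ℕ) :
    Nonempty (CompactRealization a) ↔
      ∀ n : ℕ, 1 ≤ n →
        0 ≤ (∑ d ∈ n.divisors, ArithmeticFunction.moebius (n / d) * (a d : ℤ)) ∧
        (n : ℤ) ∣ ∑ d ∈ n.divisors, ArithmeticFunction.moebius (n / d) * (a d : ℤ) := by
  rw [nonempty_compactRealization_iff]
  refine Iff.trans ?_ forall_moebius_sum_nonneg_and_dvd_iff.symm
  norm_cast
end
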